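/- Let q be a prime power and let m > 1 be an integer with gcd(m, q-1) = 1, and let n = (q^m - 1)/(q - 1). Let {C_h}_{h=0}^{n} denote the weight distribution of the q-ary Hamming code H(m,q). Then for every h with 1 ≤ h ≤ n, h! · C_h = (-1)^h q^{m(h-1)} (q^m - 1) + Σ_{i=0}^{h-1} (-1)^{h+i+1} C_i Σ_{t=i}^{h} t! · S(h,t) · q^{h-t} (q-1)^{t-i} · binom(n-i, n-t), where S(h,t) is the Stirling number of the second kind. -/

import Mathlib

/-!
Let `q = |F|`. The row space of `H` is the simplex code: its words are `y ᵥ* H` for `y ∈ F^m`, and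
all of them with `y ≠ 0` have weight `q ^ (m - 1)`, because each nonzero vector of `F^m` is a scalar
multiple of exactly one column of `H` (`simplex_weight`). Hence `∑ y, wt (y ᵥ* H) ^ h` equals
`(q ^ m - 1) * q ^ ((m - 1) * h)` for `h ≥ 1`.

The same power moment is expressed through the weights of the Hamming code, the dual of the
simplex code. The MacWilliams identity (`macWilliams`), proved by expanding
`(1 + X) ^ wt (y ᵥ* H)` in the additive characters of `F` coordinate by coordinate, gives on comparing
coefficients the binomial moments `∑ y, (wt (y ᵥ* H)).choose t` (`binomial_moment`). Newton interpolation
`w ^ h = ∑ t, t! S(h,t) (w.choose t)` (`pow_eq_sum_stirlingS2`) turns these into the `h`-th power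
moment. In the resulting equation the term of index `i = h` is
`(-1) ^ h * q ^ (m - h) * h! * C_h`; solving for it gives the recursion.
-/

open Finset

/-- The Stirling number of the second kind, defined (as in the paper) by
`S(h,t) = (1/t!) ∑_{j=0}^{t} (-1)^{t-j} C(t,j) j^h`, viewed as a rational number. -/
noncomputable def stirlingS2 (h t : ℕ) : ℚ :=
  (t.factorial : ℚ)⁻¹ *
    ∑ j ∈ Finset.range (t + 1), (-1 : ℚ) ^ (t - j) * (t.choose j : ℚ) * (j : ℚ) ^ h

/-- The weight distribution of the linear code over `F` with parity-check matrix `H`: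
`hammingWeightCount H h` is the number of codewords of Hamming weight `h`. -/
noncomputable def hammingWeightCount {F : Type*} [Field F] [Fintype F] [DecidableEq F]
    {m n : ℕ} (H : Matrix (Fin m) (Fin n) F) (h : ℕ) : ℕ :=
  Nat.card {c : Fin n → F // H.mulVec c = 0 ∧ hammingNorm c = h}

/-- Newton's forward difference formula for the power function at `0`: `t! * S(h,t)` is the
`t`-th forward difference of `r ↦ r ^ h` at `0`, which vanishes for `t > h`. -/
lemma pow_eq_sum_stirlingS2 (w h : ℕ) :
    (w : ℚ) ^ h =
      ∑ t ∈ range (h + 1), (t.factorial : ℚ) * stirlingS2 h t * (w.choose t : ℚ) := by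
  have hS : ∀ t, (t.factorial : ℚ) * stirlingS2 h t =
      (fwdDiff (1 : ℚ))^[t] (fun r : ℚ => r ^ h) 0 := by
    intro t
    have ht : (t.factorial : ℚ) ≠ 0 := by exact_mod_cast t.factorial_ne_zero
    rw [stirlingS2, mul_inv_cancel_left₀ ht, fwdDiff_iter_eq_sum_shift]
    refine sum_congr rfl fun j _ => ?_
    simp [zsmul_eq_mul]
  have key := shift_eq_sum_fwdDiff_iter (1 : ℚ) (fun r : ℚ => r ^ h) w 0
  simp only [zero_add, nsmul_eq_mul, mul_one, ← hS] at key
  rw [key]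
  -- both truncations of Newton's series agree with the sum over `t ≤ max w h`
  have e1 : ∑ t ∈ range (w + 1), (w.choose t : ℚ) * ((t.factorial : ℚ) * stirlingS2 h t) =
      ∑ t ∈ range (max w h + 1), (w.choose t : ℚ) * ((t.factorial : ℚ) * stirlingS2 h t) := by
    refine sum_subset (range_mono (by omega)) fun t _ ht => ?_
    rw [Nat.choose_eq_zero_of_lt (by simpa using ht)]
    simp
  have e2 : ∑ t ∈ range (h + 1), (w.choose t : ℚ) * ((t.factorial : ℚ) * stirlingS2 h t) =
      ∑ t ∈ range (max w h + 1), (w.choose t : ℚ) * ((t.factorial : ℚ) * stirlingS2 h t) := by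
    refine sum_subset (range_mono (by omega)) fun t _ ht => ?_
    rw [hS, fwdDiff_iter_pow_eq_zero_of_lt (by simpa using ht)]
    simp
  rw [e1, ← e2]
  exact sum_congr rfl fun t _ => mul_comm _ _

lemma factorial_mul_stirlingS2_self (h : ℕ) :
    (h.factorial : ℚ) * stirlingS2 h h = h.factorial := by
  have hS : (h.factorial : ℚ) * stirlingS2 h h =
      (fwdDiff (1 : ℚ))^[h] (fun r : ℚ => r ^ h) 0 := by
    have ht : (h.factorial : ℚ) ≠ 0 := by exact_mod_cast h.factorial_ne_zero
    rw [stirlingS2, mul_inv_cancel_left₀ ht, fwdDiff_iter_eq_sum_shift]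
    refine sum_congr rfl fun j _ => ?_
    simp [zsmul_eq_mul]
  rw [hS, fwdDiff_iter_eq_factorial]
  simp

lemma addChar_map_sum {F : Type*} [Field F] {ι : Type*} (ψ : AddChar F ℂ) (s : Finset ι) (f : ι → F) :
    ψ (∑ i ∈ s, f i) = ∏ i ∈ s, ψ (f i) := by
  classical
  induction s using Finset.induction_on with
  | empty => simp
  | insert a s ha ih => rw [sum_insert ha, prod_insert ha, AddChar.map_add_eq_mul, ih]

lemma exists_primitive_addChar {F : Type*} [Field F] [Fintype F] : ∃ ψ : AddChar F ℂ, ψ.IsPrimitive := by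
  obtain ⟨ψ, hψ⟩ := AddChar.exists_apply_ne_zero.mpr (one_ne_zero : (1 : F) ≠ 0)
  refine ⟨ψ, AddChar.IsPrimitive.of_ne_one fun h => hψ ?_⟩
  rw [h, AddChar.one_apply]

lemma prod_weight {F : Type*} [Field F] [DecidableEq F] {R : Type*} [CommMonoid R] {n : ℕ} (c : Fin n → F) (A B : R) :
    ∏ j, (if c j = 0 then A else B) = A ^ (n - hammingNorm c) * B ^ hammingNorm c := by
  rw [prod_ite, prod_const, prod_const, hammingNorm]
  congr 2
  have := card_filter_add_card_filter_not (s := (univ : Finset (Fin n))) (fun j => c j = 0)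
  simp only [card_univ, Fintype.card_fin] at this
  simp only [ne_eq]
  omega

section Code

variable {F : Type*} [Field F] [Fintype F] [DecidableEq F]

/-- Orthogonality of characters on `F^m`. -/
lemma sum_addChar_dotProduct {m : ℕ} {ψ : AddChar F ℂ} (hψ : ψ.IsPrimitive) (v : Fin m → F) :
    ∑ y : Fin m → F, ψ (y ⬝ᵥ v) = if v = 0 then (Fintype.card F : ℂ) ^ m else 0 := by
  have h1 : ∀ y : Fin m → F, ψ (y ⬝ᵥ v) = ∏ i, ψ (y i * v i) := fun y =>
    addChar_map_sum ψ _ _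
  simp_rw [h1]
  rw [← Fintype.prod_sum (fun i (a : F) => ψ (a * v i))]
  simp_rw [AddChar.sum_mulShift _ hψ]
  split_ifs with hv
  · simp [hv]
  · obtain ⟨i, hi⟩ := Function.ne_iff.mp hv
    exact prod_eq_zero (mem_univ i) (by simpa using hi)

open Polynomial in
/-- The Fourier expansion on `F` of the function equal to `1` at `0` and to `1 + X` elsewhere. -/
lemma fourier_weight {ψ : AddChar F ℂ} (hψ : ψ.IsPrimitive) (x : F) :
    ∑ a : F, (if a = 0 then 1 + C (((Fintype.card F : ℂ) - 1) / Fintype.card F) * X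
        else C (-1 / (Fintype.card F : ℂ)) * X) * C (ψ (a * x)) =
      if x = 0 then (1 : ℂ[X]) else 1 + X := by
  have hq : (Fintype.card F : ℂ) ≠ 0 := by exact_mod_cast Fintype.card_ne_zero
  have hg : ∀ a : F, (if a = 0 then 1 + C (((Fintype.card F : ℂ) - 1) / Fintype.card F) * X
        else C (-1 / (Fintype.card F : ℂ)) * X : ℂ[X]) =
      (if a = 0 then 1 + X else 0) + C (-1 / (Fintype.card F : ℂ)) * X := by
    intro a
    split_ifs
    · have : ((Fintype.card F : ℂ) - 1) / Fintype.card F = 1 + -1 / Fintype.card F := by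
        field_simp; ring
      rw [this, C_add, C_1]; ring
    · ring
  simp_rw [hg, add_mul, sum_add_distrib, ite_mul, zero_mul]
  rw [sum_ite_eq' univ (0 : F), if_pos (mem_univ _), ← mul_sum, ← map_sum, AddChar.sum_mulShift _ hψ]
  split_ifs with hx
  · rw [mul_right_comm, ← C_mul, div_mul_cancel₀ _ hq]
    simp
  · simp

open Polynomial in
/-- The MacWilliams identity between the weight enumerators of the row space of `H` (parametrized by
`y ↦ y ᵥ* H`) and of the code with parity-check matrix `H`. -/
lemma macWilliams {m n : ℕ} (H : Matrix (Fin m) (Fin n) F) :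
    ∑ y : Fin m → F, (1 + X : ℂ[X]) ^ hammingNorm (Matrix.vecMul y H) =
      C ((Fintype.card F : ℂ) ^ m) * ∑ c : Fin n → F with H.mulVec c = 0,
        (1 + C (((Fintype.card F : ℂ) - 1) / Fintype.card F) * X) ^ (n - hammingNorm c) *
          (C (-1 / (Fintype.card F : ℂ)) * X) ^ hammingNorm c := by
  obtain ⟨ψ, hψ⟩ := exists_primitive_addChar (F := F)
  have h1 : ∀ y : Fin m → F, (1 + X : ℂ[X]) ^ hammingNorm (Matrix.vecMul y H) =
      ∑ c : Fin n → F,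
        ((1 + C (((Fintype.card F : ℂ) - 1) / Fintype.card F) * X) ^ (n - hammingNorm c) *
          (C (-1 / (Fintype.card F : ℂ)) * X) ^ hammingNorm c) *
            C (ψ (y ⬝ᵥ H.mulVec c)) := by
    intro y
    have := prod_weight (R := ℂ[X]) (Matrix.vecMul y H) 1 (1 + X)
    rw [one_pow, one_mul] at this
    rw [← this]
    simp_rw [← fourier_weight hψ]
    rw [Fintype.prod_sum]
    refine sum_congr rfl fun c _ => ?_
    rw [prod_mul_distrib, prod_weight, ← map_prod, ← addChar_map_sum, Matrix.dotProduct_mulVec,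
      dotProduct_comm]
    rfl
  simp_rw [h1]
  rw [sum_comm, sum_filter, mul_sum]
  refine sum_congr rfl fun c _ => ?_
  rw [← mul_sum, ← map_sum, sum_addChar_dotProduct hψ]
  split_ifs
  · rw [mul_comm]
  · simp

open Polynomial in
/-- The coefficient of `X ^ t` in one summand on the dual side of `macWilliams`. -/
lemma coeff_weight_term (a b : ℂ) (k w t : ℕ) :
    ((1 + C a * X : ℂ[X]) ^ k * (C b * X) ^ w).coeff t =
      if w ≤ t then b ^ w * a ^ (t - w) * (k.choose (t - w) : ℂ) else 0 := by
  have h1 : (1 + C a * X : ℂ[X]) ^ k = ((1 + X) ^ k).comp (C a * X) := by simp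
  rw [mul_pow, ← C_pow, mul_left_comm, coeff_C_mul, coeff_mul_X_pow', h1]
  split_ifs
  · rw [comp_C_mul_X_coeff, coeff_one_add_X_pow]; ring
  · simp

lemma sum_code_weight {R : Type*} [CommRing R] {m n : ℕ} (H : Matrix (Fin m) (Fin n) F)
    (φ : ℕ → R) :
    ∑ c : Fin n → F with H.mulVec c = 0, φ (hammingNorm c) =
      ∑ i ∈ range (n + 1), (hammingWeightCount H i : R) * φ i := by
  rw [← sum_fiberwise_of_maps_to (t := range (n + 1)) (g := hammingNorm)]
  · refine sum_congr rfl fun i _ => ?_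
    have : ∀ c ∈ ({c ∈ ({c | H.mulVec c = 0} : Finset (Fin n → F)) | hammingNorm c = i}),
        φ (hammingNorm c) = φ i := by
      intro c hc
      rw [(mem_filter.mp hc).2]
    rw [sum_congr rfl this, sum_const, nsmul_eq_mul, filter_filter, hammingWeightCount,
      Nat.card_eq_fintype_card, Fintype.card_subtype]
  · intro c _
    have := hammingNorm_le_card_fintype (x := c)
    rw [Fintype.card_fin] at this
    exact mem_range.mpr (by omega)

/-- The binomial moments of the row space of `H`, by comparing coefficients of `X ^ t` in
the MacWilliams identity. -/
lemma binomial_moment {m n : ℕ} (H : Matrix (Fin m) (Fin n) F) {t : ℕ} (ht : t ≤ n) :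
    ∑ y : Fin m → F, ((hammingNorm (Matrix.vecMul y H)).choose t : ℚ) =
      (Fintype.card F : ℚ) ^ m / (Fintype.card F : ℚ) ^ t *
        ∑ i ∈ range (t + 1), (-1 : ℚ) ^ i * (hammingWeightCount H i : ℚ) *
          ((Fintype.card F : ℚ) - 1) ^ (t - i) * ((n - i).choose (n - t) : ℚ) := by
  have hq : (Fintype.card F : ℂ) ≠ 0 := by exact_mod_cast Fintype.card_ne_zero
  have key := congrArg (fun p => Polynomial.coeff p t) (macWilliams H)
  simp only [Polynomial.finsetSum_coeff, Polynomial.coeff_C_mul, coeff_weight_term,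
    Polynomial.coeff_one_add_X_pow] at key
  rw [sum_code_weight H (fun w => if w ≤ t then (-1 / (Fintype.card F : ℂ)) ^ w *
    (((Fintype.card F : ℂ) - 1) / Fintype.card F) ^ (t - w) * ((n - w).choose (t - w) : ℂ)
      else 0)] at key
  have hc : ((∑ y : Fin m → F, ((hammingNorm (Matrix.vecMul y H)).choose t : ℚ) : ℚ) : ℂ) =
      (((Fintype.card F : ℚ) ^ m / (Fintype.card F : ℚ) ^ t *
        ∑ i ∈ range (t + 1), (-1 : ℚ) ^ i * (hammingWeightCount H i : ℚ) *
          ((Fintype.card F : ℚ) - 1) ^ (t - i) * ((n - i).choose (n - t) : ℚ) : ℚ) : ℂ) := by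
    push_cast
    rw [key, mul_sum, mul_sum]
    symm
    -- codewords of weight greater than `t` do not contribute to the coefficient of `X ^ t`
    refine sum_subset_zero_on_sdiff (range_mono (by omega)) ?_ ?_
    · intro i hi
      have : ¬ i ≤ t := by
        simp only [mem_sdiff, mem_range] at hi; omega
      simp [this]
    · intro i hi
      have hi : i ≤ t := by simpa [Nat.lt_succ_iff] using hi
      have hch : (n - i).choose (t - i) = (n - i).choose (n - t) :=
        Nat.choose_symm_of_eq_add (by omega)
      rw [if_pos hi, hch, div_pow, div_pow]
      obtain ⟨d, rfl⟩ := Nat.exists_eq_add_of_le hi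
      rw [Nat.add_sub_cancel_left, pow_add]
      field_simp
  exact_mod_cast hc

lemma card_dotProduct_ne_zero {m : ℕ} (y : Fin m → F) (hy : y ≠ 0) :
    #{v : Fin m → F | y ⬝ᵥ v ≠ 0} + Fintype.card F ^ (m - 1) = Fintype.card F ^ m := by
  let f : Module.Dual F (Fin m → F) :=
    { toFun := fun v => y ⬝ᵥ v
      map_add' := fun u v => dotProduct_add y u v
      map_smul' := fun a v => dotProduct_smul a y v }
  have hf : f ≠ 0 := by
    intro h0
    apply hy
    ext i
    have : f (Pi.single i 1) = 0 := by rw [h0]; rfl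
    simpa [f] using this
  have h1 := Module.Dual.finrank_ker_add_one_of_ne_zero hf
  rw [Module.finrank_fin_fun] at h1
  have h2 : #{v : Fin m → F | y ⬝ᵥ v = 0} = Fintype.card F ^ (m - 1) := by
    rw [(by omega : m - 1 = Module.finrank F f.ker), ← Nat.card_eq_fintype_card (α := F),
      ← Module.natCard_eq_pow_finrank, ← Fintype.card_subtype, ← Nat.card_eq_fintype_card]
    exact Nat.card_congr (Equiv.refl _)
  have h3 := card_filter_add_card_filter_not (s := (univ : Finset (Fin m → F)))
    (fun v => y ⬝ᵥ v = 0)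
  rw [h2, card_univ, Fintype.card_fun, Fintype.card_fin] at h3
  simp only [ne_eq]
  omega

/-- The simplex code has constant weight: every nonzero vector of `F^m` is a scalar multiple of
exactly one column of `H`, so a nonzero `y` is non-orthogonal to `(q - 1) * wt` vectors. -/
lemma simplex_weight {m n : ℕ} (H : Matrix (Fin m) (Fin n) F)
    (hn : (Fintype.card F - 1) * n = Fintype.card F ^ m - 1)
    (hnz : ∀ j : Fin n, (fun i => H i j) ≠ 0)
    (hlines : ∀ j k : Fin n, j ≠ k → ∀ a : F, (fun i => H i k) ≠ a • fun i => H i j)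
    (y : Fin m → F) (hy : y ≠ 0) :
    hammingNorm (Matrix.vecMul y H) = Fintype.card F ^ (m - 1) := by
  let Φ : Fˣ × Fin n → {v : Fin m → F // v ≠ 0} := fun p =>
    ⟨(p.1 : F) • fun i => H i p.2, smul_ne_zero p.1.ne_zero (hnz p.2)⟩
  have hinj : Function.Injective Φ := by
    rintro ⟨a, j⟩ ⟨b, k⟩ hab
    have hab : (a : F) • (fun i => H i j) = (b : F) • fun i => H i k := congrArg Subtype.val hab
    by_cases hjk : j = k
    · subst hjk
      have := smul_left_injective F (hnz j) hab
      rw [Units.ext this]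
    · refine absurd ?_ (hlines j k hjk ((b : F)⁻¹ * a))
      rw [mul_smul, hab, smul_smul, inv_mul_cancel₀ b.ne_zero, one_smul]
  have hbij : Function.Bijective Φ := by
    rw [Fintype.bijective_iff_injective_and_card]
    refine ⟨hinj, ?_⟩
    rw [Fintype.card_prod, Fintype.card_units, Fintype.card_fin, hn,
      Fintype.card_subtype_compl (fun v : Fin m → F => v = 0), Fintype.card_subtype_eq,
      Fintype.card_fun, Fintype.card_fin]
  have hdot : ∀ p : Fˣ × Fin n, y ⬝ᵥ (Φ p).1 = p.1 * Matrix.vecMul y H p.2 := fun p =>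
    dotProduct_smul _ _ _
  have hcard : #((univ : Finset Fˣ) ×ˢ ({j | Matrix.vecMul y H j ≠ 0} : Finset (Fin n))) =
      #{v : Fin m → F | y ⬝ᵥ v ≠ 0} := by
    refine card_nbij (fun p => (Φ p).1) ?_ ?_ ?_
    · intro p hp
      have hp : Matrix.vecMul y H p.2 ≠ 0 := by simpa using hp
      simpa [hdot] using hp
    · exact fun p _ p' _ h => hinj (Subtype.ext h)
    · intro v hv
      have hv : y ⬝ᵥ v ≠ 0 := by simpa using hv
      have hv0 : v ≠ 0 := fun h => hv (by rw [h, dotProduct_zero])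
      obtain ⟨p, hp⟩ := hbij.2 ⟨v, hv0⟩
      have hp' : (Φ p).1 = v := congrArg Subtype.val hp
      refine ⟨p, ?_, hp'⟩
      rw [← hp', hdot] at hv
      simpa using hv
  rw [card_product, card_univ, Fintype.card_units] at hcard
  have h1 := card_dotProduct_ne_zero y hy
  rw [← hcard] at h1
  change (Fintype.card F - 1) * hammingNorm (Matrix.vecMul y H) + _ = _ at h1
  have hm : m ≠ 0 := by
    rintro rfl
    exact hy (Subsingleton.elim _ _)
  have hq : 1 < Fintype.card F := Fintype.one_lt_card
  obtain ⟨m, rfl⟩ := Nat.exists_eq_succ_of_ne_zero hm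
  obtain ⟨r, hr⟩ := Nat.exists_eq_add_of_lt hq
  rw [hr] at h1 ⊢
  simp only [Nat.succ_eq_add_one, Nat.add_sub_cancel, pow_succ] at h1 ⊢
  refine Nat.eq_of_mul_eq_mul_left (by omega : 0 < 1 + r) ?_
  linarith

end Code

/-- **Theorem 1.** Let `q` be a prime power, `m > 1`, and `n = (q^m - 1)/(q - 1)`.
Let `{C_h}` be the weight distribution of the `q`-ary Hamming code `H(m,q)`,
realized as the code with a parity-check matrix `H` whose columns are nonzero and
pairwise non-proportional (hence representatives of the one-dimensional subspaces of
`F_q^m`).  Then for `1 ≤ h ≤ n`,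
`h! C_h = (-1)^h q^{m(h-1)} (q^m - 1)
  + ∑_{i=0}^{h-1} (-1)^{h+i+1} C_i ∑_{t=i}^{h} t! S(h,t) q^{h-t} (q-1)^{t-i} C(n-i, n-t)`. -/
theorem hamming_weight_distribution_recursion_coprime
    (F : Type*) [Field F] [Fintype F] [DecidableEq F]
    (q : ℕ) (hq : q = Fintype.card F)
    (m : ℕ) (hm : 1 < m) (hcop : Nat.gcd m (q - 1) = 1)
    (n : ℕ) (hn : n = (q ^ m - 1) / (q - 1))
    (H : Matrix (Fin m) (Fin n) F)
    (hnz : ∀ j : Fin n, (fun i => H i j) ≠ 0)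
    (hlines : ∀ j k : Fin n, j ≠ k → ∀ a : F,
      (fun i => H i k) ≠ a • fun i => H i j)
    (C : ℕ → ℕ) (hC : ∀ h : ℕ, C h = hammingWeightCount H h)
    (h : ℕ) (h1 : 1 ≤ h) (h2 : h ≤ n) :
    (h.factorial : ℚ) * (C h : ℚ) =
      (-1 : ℚ) ^ h * (q : ℚ) ^ (m * (h - 1)) * ((q : ℚ) ^ m - 1)
      + ∑ i ∈ Finset.range h, (-1 : ℚ) ^ (h + i + 1) * (C i : ℚ) *
          ∑ t ∈ Finset.Icc i h,
            (t.factorial : ℚ) * stirlingS2 h t * (q : ℚ) ^ (h - t) *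
              ((q : ℚ) - 1) ^ (t - i) * ((n - i).choose (n - t) : ℚ) := by
  have hq1 : 1 < q := hq ▸ Fintype.one_lt_card
  have hq0 : (q : ℚ) ≠ 0 := by exact_mod_cast (by omega : q ≠ 0)
  have hn' : (q - 1) * n = q ^ m - 1 := by
    rw [hn]
    exact Nat.mul_div_cancel' (by simpa using Nat.sub_dvd_pow_sub_pow q 1 m)
  have hw := simplex_weight H (by rw [← hq]; exact hn') hnz hlines
  rw [← hq] at hw
  have hmom : ∑ y : Fin m → F, (hammingNorm (Matrix.vecMul y H) : ℚ) ^ h =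
      ((q : ℚ) ^ m - 1) * ((q : ℚ) ^ (m - 1)) ^ h := by
    rw [← add_sum_erase _ _ (mem_univ (0 : Fin m → F)), Matrix.zero_vecMul, hammingNorm_zero,
      Nat.cast_zero, zero_pow (by omega), zero_add,
      sum_congr rfl (g := fun _ => ((q : ℚ) ^ (m - 1)) ^ h)
        (fun y hy => by rw [hw y (ne_of_mem_erase hy)]; push_cast; rfl),
      sum_const, card_erase_of_mem (mem_univ _), card_univ, Fintype.card_fun, Fintype.card_fin,
      ← hq, nsmul_eq_mul, Nat.cast_sub (Nat.one_le_pow _ _ (by omega))]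
    push_cast
    rfl
  have hbin : ∑ y : Fin m → F, (hammingNorm (Matrix.vecMul y H) : ℚ) ^ h =
      ∑ t ∈ range (h + 1), ∑ i ∈ range (t + 1), (t.factorial : ℚ) * stirlingS2 h t *
        ((q : ℚ) ^ m / (q : ℚ) ^ t * ((-1 : ℚ) ^ i * (C i : ℚ) *
          ((q : ℚ) - 1) ^ (t - i) * ((n - i).choose (n - t) : ℚ))) := by
    simp_rw [pow_eq_sum_stirlingS2 _ h]
    rw [sum_comm]
    refine sum_congr rfl fun t ht => ?_
    rw [mem_range] at ht
    rw [← mul_sum, binomial_moment H (by omega : t ≤ n), ← hq, mul_sum, mul_sum]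
    simp_rw [hC]
  rw [hmom] at hbin
  have hswap : ((q : ℚ) ^ m - 1) * ((q : ℚ) ^ (m - 1)) ^ h =
      (q : ℚ) ^ m / (q : ℚ) ^ h * ∑ i ∈ range (h + 1), (-1 : ℚ) ^ i * (C i : ℚ) *
        ∑ t ∈ Finset.Icc i h,
            (t.factorial : ℚ) * stirlingS2 h t * (q : ℚ) ^ (h - t) *
              ((q : ℚ) - 1) ^ (t - i) * ((n - i).choose (n - t) : ℚ) := by
    rw [hbin, sum_comm' (t' := range (h + 1)) (s' := fun i => Finset.Icc i h), mul_sum]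
    · refine sum_congr rfl fun i _ => ?_
      rw [mul_sum, mul_sum]
      refine sum_congr rfl fun t ht => ?_
      obtain ⟨d, hd⟩ := Nat.exists_eq_add_of_le (mem_Icc.mp ht).2
      rw [hd, Nat.add_sub_cancel_left, pow_add]
      field_simp
    · intro t i
      simp only [mem_range, mem_Icc]
      omega
  rw [sum_range_succ, Icc_self, sum_singleton, factorial_mul_stirlingS2_self] at hswap
  simp only [Nat.sub_self, pow_zero, mul_one, Nat.choose_self, Nat.cast_one] at hswap
  have hpow : ((q : ℚ) ^ (m - 1)) ^ h = (q : ℚ) ^ m / (q : ℚ) ^ h * (q : ℚ) ^ (m * (h - 1)) := by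
    obtain ⟨k, rfl⟩ := Nat.exists_eq_add_of_le' h1
    obtain ⟨l, rfl⟩ := Nat.exists_eq_add_of_le' hm.le
    rw [Nat.add_sub_cancel, Nat.add_sub_cancel, eq_comm, div_mul_eq_mul_div,
      div_eq_iff (pow_ne_zero _ hq0)]
    ring
  rw [hpow, mul_left_comm] at hswap
  have hfin := mul_left_cancel₀ (div_ne_zero (pow_ne_zero m hq0) (pow_ne_zero h hq0)) hswap
  have hs : (-1 : ℚ) ^ h * (-1 : ℚ) ^ h = 1 := by rw [← mul_pow]; simp
  have hsum : ∑ i ∈ Finset.range h, (-1 : ℚ) ^ (h + i + 1) * (C i : ℚ) *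
          ∑ t ∈ Finset.Icc i h,
            (t.factorial : ℚ) * stirlingS2 h t * (q : ℚ) ^ (h - t) *
              ((q : ℚ) - 1) ^ (t - i) * ((n - i).choose (n - t) : ℚ) =
      -(-1 : ℚ) ^ h * ∑ i ∈ Finset.range h, (-1 : ℚ) ^ i * (C i : ℚ) *
          ∑ t ∈ Finset.Icc i h,
            (t.factorial : ℚ) * stirlingS2 h t * (q : ℚ) ^ (h - t) *
              ((q : ℚ) - 1) ^ (t - i) * ((n - i).choose (n - t) : ℚ) := by
    rw [mul_sum]
    refine sum_congr rfl fun i _ => ?_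
    rw [pow_succ, pow_add]
    ring
  rw [hsum]
  linear_combination (-(-1 : ℚ) ^ h) * hfin - (h.factorial : ℚ) * (C h : ℚ) * hs
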